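/- arXiv:2206.08314 — 2 statements merged into one kernel-verified Lean document; each statement's English description precedes it below -/
import Mathlib

section
/- Let l ≥ 1 be an integer, let Δ ⊆ ℂ be a closed disk, and let z be an interior point of Δ. Then ∫_Δ (conj(ζ) − conj(z))^l / (ζ − z)^{l+1} dA(ζ) = 0. -/
open Complex MeasureTheory Metric

lemma aux_exp_int (k : ℤ) (hk : k ≠ 0) :
    ∫ θ in (-Real.pi)..Real.pi, Complex.exp (((k : ℂ) * I) * (θ : ℂ)) = 0 := by
  have hc : (k : ℂ) * I ≠ 0 := mul_ne_zero (by exact_mod_cast hk) I_ne_zero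
  rw [integral_exp_mul_complex hc]
  have : Complex.exp ((k : ℂ) * I * ((Real.pi : ℝ) : ℂ))
      = Complex.exp ((k : ℂ) * I * ((-Real.pi : ℝ) : ℂ)) := by
    rw [Complex.exp_eq_exp_iff_exists_int]
    exact ⟨k, by push_cast; ring⟩
  rw [this]; simp

lemma aux_antiper (g : ℝ → ℂ) (h : ∀ θ, g (θ + Real.pi) = - g θ) :
    ∫ θ in (-Real.pi)..Real.pi, g θ = 0 := by
  have hp : Function.Periodic g (2 * Real.pi) := by
    intro θ
    have : θ + 2 * Real.pi = (θ + Real.pi) + Real.pi := by ring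
    rw [this, h, h, neg_neg]
  have h1 := hp.intervalIntegral_add_eq (-Real.pi) 0
  have h2 : ∫ θ in (-Real.pi)..Real.pi, g (θ + Real.pi) = ∫ θ in (0:ℝ)..(0 + 2 * Real.pi), g θ := by
    rw [intervalIntegral.integral_comp_add_right]
    congr 1 <;> ring
  have h3 : -Real.pi + 2 * Real.pi = Real.pi := by ring
  rw [h3] at h1
  rw [← h1] at h2
  simp only [h, intervalIntegral.integral_neg] at h2
  exact self_eq_neg.mp h2.symm

/-- distance to the boundary in direction `θ` -/
noncomputable def RR (w : ℂ) (r θ : ℝ) : ℝ :=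
  Real.sqrt (r ^ 2 - (w.re * Real.sin θ - w.im * Real.cos θ) ^ 2)
    - (w.re * Real.cos θ + w.im * Real.sin θ)

lemma RR_cont (w : ℂ) (r : ℝ) : Continuous (RR w r) := by
  unfold RR; fun_prop

lemma aux_angular (w : ℂ) (r : ℝ) (l : ℕ) (hl : 1 ≤ l) :
    ∫ θ in (-Real.pi)..Real.pi,
      (RR w r θ : ℂ) * Complex.exp (((-(2 * l + 1) : ℤ) : ℂ) * I * (θ : ℂ)) = 0 := by
  have key : ∀ θ : ℝ, (RR w r θ : ℂ) * Complex.exp (((-(2 * l + 1) : ℤ) : ℂ) * I * (θ : ℂ))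
      = ((Real.sqrt (r ^ 2 - (w.re * Real.sin θ - w.im * Real.cos θ) ^ 2) : ℝ) : ℂ)
          * Complex.exp (((-(2 * l + 1) : ℤ) : ℂ) * I * (θ : ℂ))
        - ((w.re - w.im * I) / 2 * Complex.exp (((-(2 * l) : ℤ) : ℂ) * I * (θ : ℂ))
          + (w.re + w.im * I) / 2 * Complex.exp (((-(2 * l + 2) : ℤ) : ℂ) * I * (θ : ℂ))) := by
    intro θ
    have e1 : Complex.exp (((-(2 * l) : ℤ) : ℂ) * I * (θ : ℂ))
        = Complex.exp (((-(2 * l + 1) : ℤ) : ℂ) * I * (θ : ℂ)) * Complex.exp (θ * I) := by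
      rw [← Complex.exp_add]; congr 1; push_cast; ring
    have e2 : Complex.exp (((-(2 * l + 2) : ℤ) : ℂ) * I * (θ : ℂ))
        = Complex.exp (((-(2 * l + 1) : ℤ) : ℂ) * I * (θ : ℂ)) * Complex.exp ((-θ) * I) := by
      rw [← Complex.exp_add]; congr 1; push_cast; ring
    rw [e1, e2, Complex.exp_mul_I, Complex.exp_mul_I, Complex.cos_neg, Complex.sin_neg]
    unfold RR
    push_cast
    linear_combination (-(w.im * Complex.sin θ)) * Complex.exp ((-(2 * (l:ℂ) + 1)) * I * (θ : ℂ)) * I_sq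
  simp_rw [key]
  rw [intervalIntegral.integral_sub, intervalIntegral.integral_add,
    intervalIntegral.integral_const_mul, intervalIntegral.integral_const_mul,
    aux_exp_int _ (by omega), aux_exp_int _ (by omega), aux_antiper]
  · simp
  · intro θ
    rw [Real.sin_add_pi, Real.cos_add_pi]
    have : Complex.exp (((-(2 * l + 1) : ℤ) : ℂ) * I * ((θ + Real.pi : ℝ) : ℂ))
      = - Complex.exp (((-(2 * l + 1) : ℤ) : ℂ) * I * (θ : ℂ)) := by
      have h1 : ((-(2 * l + 1) : ℤ) : ℂ) * I * ((θ + Real.pi : ℝ) : ℂ)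
        = ((-(2 * l + 1) : ℤ) : ℂ) * I * (θ : ℂ) + Real.pi * I
          + ((-(l + 1) : ℤ) : ℂ) * (2 * Real.pi * I) := by push_cast; ring
      rw [h1, Complex.exp_add, Complex.exp_int_mul_two_pi_mul_I, Complex.exp_add, Complex.exp_pi_mul_I]
      ring
    rw [this]
    have h2 : (w.re * -Real.sin θ - w.im * -Real.cos θ) ^ 2
      = (w.re * Real.sin θ - w.im * Real.cos θ) ^ 2 := by ring
    rw [h2]; ring
  all_goals apply Continuous.intervalIntegrable; fun_prop

lemma aux_mem (w : ℂ) (r : ℝ) (hr : 0 < r) (hw : ‖w‖ < r) (ρ θ : ℝ) (hρ : 0 < ρ) :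
    ‖(ρ : ℂ) * (Real.cos θ + Real.sin θ * I) + w‖ ≤ r ↔ ρ ≤ RR w r θ := by
  have hw2 : w.re ^ 2 + w.im ^ 2 < r ^ 2 := by
    have : ‖w‖ ^ 2 < r ^ 2 := by gcongr
    rw [← Complex.normSq_eq_norm_sq, Complex.normSq_apply] at this
    nlinarith
  have hcs := Real.sin_sq_add_cos_sq θ
  rw [← sq_le_sq₀ (norm_nonneg _) hr.le, ← Complex.normSq_eq_norm_sq, Complex.normSq_apply]
  have hre : ((ρ : ℂ) * (Real.cos θ + Real.sin θ * I) + w).re = ρ * Real.cos θ + w.re := by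
    simp [-Complex.ofReal_cos, -Complex.ofReal_sin]
  have him : ((ρ : ℂ) * (Real.cos θ + Real.sin θ * I) + w).im = ρ * Real.sin θ + w.im := by
    simp [-Complex.ofReal_cos, -Complex.ofReal_sin]
  rw [hre, him]
  unfold RR
  set C := Real.cos θ
  set S := Real.sin θ
  have huv : (w.re * S - w.im * C) ^ 2 + (w.re * C + w.im * S) ^ 2 = w.re ^ 2 + w.im ^ 2 := by
    linear_combination (w.re ^ 2 + w.im ^ 2) * hcs
  have hexp : (ρ * C + w.re) * (ρ * C + w.re) + (ρ * S + w.im) * (ρ * S + w.im)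
      = (ρ + (w.re * C + w.im * S)) ^ 2 + (w.re * S - w.im * C) ^ 2 := by
    linear_combination ρ ^ 2 * hcs - huv
  rw [hexp]
  set u := w.re * C + w.im * S
  set v := w.re * S - w.im * C
  have hD : 0 ≤ r ^ 2 - v ^ 2 := by nlinarith [sq_nonneg u]
  have hu : |u| < Real.sqrt (r ^ 2 - v ^ 2) := by
    apply Real.lt_sqrt_of_sq_lt
    rw [sq_abs]; linarith
  have hu' := (abs_lt.mp hu).1
  constructor
  · intro h
    have := Real.abs_le_sqrt (show (ρ + u) ^ 2 ≤ r ^ 2 - v ^ 2 by linarith)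
    linarith [le_abs_self (ρ + u)]
  · intro h
    have : (ρ + u) ^ 2 ≤ r ^ 2 - v ^ 2 := by
      rw [← Real.sq_sqrt hD, sq_le_sq, abs_of_nonneg (Real.sqrt_nonneg _), abs_le]
      constructor <;> linarith
    linarith

lemma RR_pos (w : ℂ) (r : ℝ) (hr : 0 < r) (hw : ‖w‖ < r) (θ : ℝ) : 0 < RR w r θ := by
  have hp : 0 < r - ‖w‖ := by linarith
  refine hp.trans_le ((aux_mem w r hr hw (r - ‖w‖) θ hp).mp ?_)
  refine (norm_add_le _ _).trans ?_
  rw [norm_mul, Complex.ofReal_cos, Complex.ofReal_sin, Complex.norm_cos_add_sin_mul_I,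
    Complex.norm_real, Real.norm_of_nonneg hp.le]
  linarith

lemma RR_le (w : ℂ) (r : ℝ) (hr : 0 < r) (hw : ‖w‖ < r) (θ : ℝ) : RR w r θ ≤ 2 * r := by
  have hp := RR_pos w r hr hw θ
  have h := (aux_mem w r hr hw (RR w r θ) θ hp).mpr le_rfl
  have h2 := norm_sub_le ((RR w r θ : ℂ) * (Real.cos θ + Real.sin θ * I) + w) w
  rw [add_sub_cancel_right, norm_mul, Complex.ofReal_cos, Complex.ofReal_sin,
    Complex.norm_cos_add_sin_mul_I, Complex.norm_real, Real.norm_of_nonneg hp.le] at h2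
  rw [Complex.ofReal_cos, Complex.ofReal_sin] at h
  linarith

lemma aux_val (l : ℕ) (ρ θ : ℝ) (hρ : 0 < ρ) :
    (ρ : ℂ) * ((starRingEnd ℂ ((ρ : ℂ) * (Real.cos θ + Real.sin θ * I))) ^ l
      / ((ρ : ℂ) * (Real.cos θ + Real.sin θ * I)) ^ (l + 1))
    = Complex.exp (((-(2 * l + 1) : ℤ) : ℂ) * I * (θ : ℂ)) := by
  have hρ' : (ρ : ℂ) ≠ 0 := by exact_mod_cast hρ.ne'
  rw [Complex.ofReal_cos, Complex.ofReal_sin, ← Complex.exp_mul_I, map_mul, ← Complex.exp_conj]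
  simp only [map_mul, Complex.conj_ofReal, Complex.conj_I, mul_pow, ← Complex.exp_nat_mul]
  have : Complex.exp (((-(2 * l + 1) : ℤ) : ℂ) * I * (θ : ℂ))
    = Complex.exp (l * (θ * -I)) / Complex.exp (((l + 1 : ℕ) : ℂ) * (θ * I)) := by
    rw [← Complex.exp_sub]; congr 1; push_cast; ring
  rw [this]
  have := Complex.exp_ne_zero (((l + 1 : ℕ) : ℂ) * (θ * I))
  field_simp
  ring

theorem aux_main (w : ℂ) (r : ℝ) (hr : 0 < r) (hw : ‖w‖ < r) (l : ℕ) (hl : 1 ≤ l) :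
    ∫ p in Set.Ioi (0:ℝ) ×ˢ Set.Ioo (-Real.pi) Real.pi,
      {p : ℝ × ℝ | p.1 ≤ RR w r p.2}.indicator
        (fun p => Complex.exp (((-(2 * l + 1) : ℤ) : ℂ) * I * (p.2 : ℂ))) p = 0 := by
  have hR := RR_cont w r
  have hms : MeasurableSet {p : ℝ × ℝ | p.1 ≤ RR w r p.2} :=
    (isClosed_le continuous_fst (hR.comp continuous_snd)).measurableSet
  have hint : IntegrableOn ({p : ℝ × ℝ | p.1 ≤ RR w r p.2}.indicator
        (fun p => Complex.exp (((-(2 * l + 1) : ℤ) : ℂ) * I * (p.2 : ℂ))))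
        (Set.Ioi (0:ℝ) ×ˢ Set.Ioo (-Real.pi) Real.pi) (volume.prod volume) := by
    have hm : MeasurableSet (Set.Ioi (0:ℝ) ×ˢ Set.Ioo (-Real.pi) Real.pi) :=
      measurableSet_Ioi.prod measurableSet_Ioo
    rw [IntegrableOn, integrable_indicator_iff hms, IntegrableOn, Measure.restrict_restrict hms]
    have hc : Continuous (fun p : ℝ × ℝ =>
      Complex.exp (((-(2 * l + 1) : ℤ) : ℂ) * I * (p.2 : ℂ))) := by fun_prop
    have hK : IsCompact (Set.Icc (0:ℝ) (2 * r) ×ˢ Set.Icc (-Real.pi) Real.pi) :=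
      isCompact_Icc.prod isCompact_Icc
    refine (hc.continuousOn.integrableOn_compact hK).mono_set ?_
    rintro ⟨a, b⟩ ⟨h1, h2, h3⟩
    simp only [Set.mem_setOf_eq, Set.mem_Ioi] at h1 h2
    exact ⟨⟨h2.le, h1.trans (RR_le w r hr hw b)⟩, Set.Ioo_subset_Icc_self h3⟩
  rw [Measure.volume_eq_prod, ← Measure.prod_restrict, integral_prod_symm]
  swap
  · rw [Measure.prod_restrict]; exact hint
  rw [← aux_angular w r l hl, intervalIntegral.integral_of_le (by linarith [Real.pi_pos]),
    integral_Ioc_eq_integral_Ioo]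
  congr 1
  ext θ
  have : (fun x : ℝ => {p : ℝ × ℝ | p.1 ≤ RR w r p.2}.indicator
        (fun p => Complex.exp (((-(2 * l + 1) : ℤ) : ℂ) * I * (p.2 : ℂ))) (x, θ))
      = (Set.Iic (RR w r θ)).indicator
        (fun _ => Complex.exp (((-(2 * l + 1) : ℤ) : ℂ) * I * (θ : ℂ))) := by
    ext x
    simp [Set.indicator]
  rw [this, integral_indicator measurableSet_Iic, Measure.restrict_restrict measurableSet_Iic,
    Set.Iic_inter_Ioi, setIntegral_const]
  simp [(RR_pos w r hr hw θ).le]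

/-- `∫_Δ (conj ζ − conj z)^l/(ζ − z)^{l+1} dA(ζ) = 0` for `l ≥ 1`
and `z` an interior point of the closed disk `Δ`. -/
theorem integral_conj_power_singular (c : ℂ) (r : ℝ) (hr : 0 < r) (l : ℕ) (hl : 1 ≤ l)
    (z : ℂ) (hz : z ∈ ball c r) :
    ∫ ζ in closedBall c r, ((starRingEnd ℂ) ζ - (starRingEnd ℂ) z) ^ l / (ζ - z) ^ (l + 1) = 0 := by
  have hw : ‖z - c‖ < r := by rwa [mem_ball, dist_eq_norm] at hz
  rw [← integral_indicator measurableSet_closedBall, ← integral_add_right_eq_self _ z,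
    ← Complex.integral_comp_polarCoord_symm, ← aux_main (z - c) r hr hw l hl, polarCoord_target]
  refine setIntegral_congr_fun (measurableSet_Ioi.prod measurableSet_Ioo) ?_
  rintro ⟨ρ, θ⟩ ⟨h1, -⟩
  simp only [Set.mem_Ioi] at h1
  have hm := aux_mem (z - c) r hr hw ρ θ h1
  have hv := aux_val l ρ θ h1
  simp only [Complex.polarCoord_symm_apply, Set.indicator, mem_closedBall, dist_eq_norm,
    Set.mem_setOf_eq, add_sub_assoc, hm]
  split_ifs
  · rw [← hv, ← map_sub, Complex.real_smul]
    simp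
  · simp
end

section
/- Let D' ⊆ ℂ and δ ⊆ ℂ be closed disks with δ ⊆ D', let m ≥ 2 and n ≥ 0 be integers, and let s be an interior point of δ. Then ∫_{D' \ δ} (conj(ζ) − conj(s))^n / (ζ − s)^m dA(ζ) = 0. -/
open Complex MeasureTheory Metric

theorem aux_polar (f : ℂ → ℂ) (hm : Measurable f) (hf : Integrable f) :
    ∫ z, f z = ∫ r in Set.Ioi (0:ℝ), (2 * Real.pi * r) • Real.circleAverage f 0 r := by
  have hmm : Measurable (fun p : ℝ × ℝ => p.1 • f (Complex.polarCoord.symm p)) := by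
    simp only [Complex.polarCoord_symm_apply]
    refine measurable_fst.smul (hm.comp ?_)
    fun_prop
  have hint : IntegrableOn (fun p : ℝ × ℝ => p.1 • f (Complex.polarCoord.symm p))
      (Set.Ioi (0 : ℝ) ×ˢ Set.Ioo (-Real.pi) Real.pi) := by
    refine ⟨hmm.aestronglyMeasurable, ?_⟩
    have h := Complex.lintegral_comp_polarCoord_symm (fun z => ‖f z‖ₑ)
    have h2 := hf.2
    rw [HasFiniteIntegral, ← h] at h2
    rw [HasFiniteIntegral]
    refine lt_of_le_of_lt (le_of_eq ?_) h2
    refine setLIntegral_congr_fun (measurableSet_Ioi.prod measurableSet_Ioo) (fun p hp => ?_)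
    simp only [enorm_smul, smul_eq_mul]
    rw [Real.enorm_of_nonneg (le_of_lt hp.1)]
  rw [← Complex.integral_comp_polarCoord_symm f]
  have ht : polarCoord.target = Set.Ioi (0 : ℝ) ×ˢ Set.Ioo (-Real.pi) Real.pi := rfl
  rw [ht, Measure.volume_eq_prod, setIntegral_prod _ (by rwa [← Measure.volume_eq_prod])]
  refine setIntegral_congr_fun measurableSet_Ioi (fun r hr => ?_)
  simp only
  rw [integral_smul, mul_comm, mul_smul]
  congr 1
  have hpi : (2 * Real.pi) ≠ 0 := by positivity
  rw [Real.circleAverage_def, smul_smul, mul_inv_cancel₀ hpi, one_smul]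
  have hper : Function.Periodic (fun θ => f (circleMap 0 r θ)) (2 * Real.pi) :=
    fun θ => by simp only [periodic_circleMap 0 r θ]
  have := hper.intervalIntegral_add_eq (-Real.pi) 0
  rw [zero_add, show -Real.pi + 2 * Real.pi = Real.pi by ring] at this
  rw [← this, intervalIntegral.integral_of_le (by linarith [Real.pi_pos]),
    integral_Ioc_eq_integral_Ioo]
  refine setIntegral_congr_fun measurableSet_Ioo (fun θ _ => ?_)
  simp only [Complex.polarCoord_symm_apply, circleMap, zero_add, Complex.exp_mul_I]
  simp

theorem aux_avg_out (b : ℂ) (r : ℝ) (hr : 0 < r) (hb : ‖b‖ < r) (k : ℕ) :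
    Real.circleAverage (fun z => (starRingEnd ℂ) z ^ k / (z - b)) 0 r = 0 := by
  have hrc : (r:ℂ) ≠ 0 := by exact_mod_cast hr.ne'
  have h1 : Real.circleAverage (fun z => (starRingEnd ℂ) z ^ k / (z - b)) 0 r
      = Real.circleAverage ((Complex.conjCLE : ℂ →L[ℝ] ℂ) ∘
        (fun z => z ^ (k+1) / (r ^ 2 - (starRingEnd ℂ) b * z))) 0 r := by
    refine Real.circleAverage_congr_sphere (fun z hz => ?_)
    rw [abs_of_pos hr, mem_sphere_zero_iff_norm] at hz
    have hz0 : z ≠ 0 := by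
      intro h; simp [h] at hz; linarith
    have hzz : (starRingEnd ℂ) z * z = r ^ 2 := by
      rw [Complex.conj_mul', hz]
    have hzc : (starRingEnd ℂ) z ≠ 0 := by simpa using hz0
    simp only [Function.comp, ContinuousLinearEquiv.coe_coe, Complex.conjCLE_apply, map_div₀, map_pow, map_sub, map_mul, Complex.conj_conj, Complex.conj_ofReal]
    rw [← hzz, show (starRingEnd ℂ) z * z - b * (starRingEnd ℂ) z = (starRingEnd ℂ) z * (z - b) by ring, pow_succ', mul_div_mul_left _ _ hzc]
  have hne : ∀ z ∈ closedBall (0:ℂ) r, (r:ℂ) ^ 2 - (starRingEnd ℂ) b * z ≠ 0 := by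
    intro z hz h
    rw [mem_closedBall_zero_iff] at hz
    have := congrArg norm (sub_eq_zero.1 h)
    simp only [norm_pow, Complex.norm_real, norm_mul, RCLike.norm_conj, Real.norm_eq_abs, sq_abs] at this
    have : ‖b‖ * ‖z‖ < r ^ 2 := by nlinarith [norm_nonneg b, norm_nonneg z]
    linarith
  have hd : DiffContOnCl ℂ (fun z => z ^ (k+1) / ((r:ℂ) ^ 2 - (starRingEnd ℂ) b * z)) (ball 0 |r|) := by
    rw [abs_of_pos hr]
    refine DifferentiableOn.diffContOnCl ?_
    rw [closure_ball _ hr.ne']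
    exact DifferentiableOn.div (by fun_prop) (by fun_prop) hne
  have hci : CircleIntegrable (fun z => z ^ (k+1) / ((r:ℂ) ^ 2 - (starRingEnd ℂ) b * z)) 0 r := by
    refine ContinuousOn.circleIntegrable hr.le ?_
    refine ContinuousOn.div (by fun_prop) (by fun_prop) (fun z hz => hne z (sphere_subset_closedBall hz))
  rw [h1, ContinuousLinearMap.circleAverage_comp_comm _ hci, hd.circleAverage]
  simp

theorem aux_avg_in (b : ℂ) (r : ℝ) (hr : 0 < r) (hb : r < ‖b‖) (k : ℕ) :
    Real.circleAverage (fun z => (starRingEnd ℂ) z ^ k / (z - b)) 0 r = - r ^ (2 * k) / b ^ (k+1) := by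
  have hb0 : b ≠ 0 := by
    intro h; simp [h] at hb; linarith
  have hne : ∀ z ∈ closedBall (0:ℂ) r, z - b ≠ 0 := by
    intro z hz h
    rw [mem_closedBall_zero_iff, sub_eq_zero.1 h] at hz
    linarith
  have hci : ∀ k, CircleIntegrable (fun z => (starRingEnd ℂ) z ^ k / (z - b)) 0 r := by
    intro k
    refine ContinuousOn.circleIntegrable hr.le ?_
    refine ContinuousOn.div (Continuous.continuousOn (Complex.continuous_conj.pow k)) (by fun_prop) (fun z hz => hne z (sphere_subset_closedBall hz))
  have hcz : ∀ k, CircleIntegrable (fun z => (starRingEnd ℂ) z ^ k) 0 r := by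
    intro k
    exact ContinuousOn.circleIntegrable hr.le (Continuous.continuousOn (Complex.continuous_conj.pow k))
  induction k with
  | zero =>
    have hd : DiffContOnCl ℂ (fun z => (starRingEnd ℂ) z ^ 0 / (z - b)) (ball 0 |r|) := by
      rw [abs_of_pos hr]
      refine DifferentiableOn.diffContOnCl ?_
      rw [closure_ball _ hr.ne']
      simp only [pow_zero]
      exact DifferentiableOn.div (by fun_prop) (by fun_prop) hne
    rw [hd.circleAverage]
    simp [neg_div, inv_neg]
  | succ k ih =>
    have h0 : Real.circleAverage (fun z => (starRingEnd ℂ) z ^ (k+1)) 0 r = 0 := by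
      have : Real.circleAverage (fun z => (starRingEnd ℂ) z ^ (k+1)) 0 r =
        Real.circleAverage ((Complex.conjCLE : ℂ →L[ℝ] ℂ) ∘ (fun z => z ^ (k+1))) 0 r := by
        congr 1; ext z; simp
      rw [this, ContinuousLinearMap.circleAverage_comp_comm _ 
        (ContinuousOn.circleIntegrable hr.le (by fun_prop)), DiffContOnCl.circleAverage]
      · simp
      · exact Differentiable.diffContOnCl (by fun_prop)
    have h1 : Real.circleAverage (fun z => (starRingEnd ℂ) z ^ (k+1) / (z - b)) 0 r =
      Real.circleAverage ((fun z => ((r:ℂ)^2 / b) • ((starRingEnd ℂ) z ^ k / (z - b))) - (fun z => (1/b) • (starRingEnd ℂ) z ^ (k+1))) 0 r := by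
      refine Real.circleAverage_congr_sphere (fun z hz => ?_)
      rw [abs_of_pos hr] at hz
      have hzb := hne z (sphere_subset_closedBall hz)
      rw [mem_sphere_zero_iff_norm] at hz
      have hzz : (starRingEnd ℂ) z * z = r ^ 2 := by
        rw [Complex.conj_mul', hz]
      simp only [Pi.sub_apply, smul_eq_mul]
      rw [← hzz]
      field_simp
      ring
    rw [h1, Real.circleAverage_sub]
    · have e1 := Real.circleAverage_fun_smul (a := (r:ℂ)^2 / b) (f := fun z => ((starRingEnd ℂ) z ^ k / (z - b))) (c := 0) (R := r)
      have e2 := Real.circleAverage_fun_smul (a := 1 / b) (f := fun z => ((starRingEnd ℂ) z ^ (k+1))) (c := 0) (R := r)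
      rw [e1, e2, h0, ih]
      simp only [smul_eq_mul]
      field_simp
      ring
    · simpa using (hci k).const_fun_smul (a := (r:ℂ)^2 / b)
    · simpa using (hcz (k+1)).const_fun_smul (a := 1/b)

theorem aux_inv (r : ℝ) : IntegrableOn (fun z : ℂ => z⁻¹) (ball 0 r) := by
  have h : IntegrableOn (fun x : ℂ => (fun y : ℝ => y⁻¹) ‖x‖) (ball (0 : ℂ) r) volume := by
    rw [MeasureTheory.integrableOn_fun_norm_addHaar]
    rw [integrableOn_congr_fun (g := fun _ => (1:ℝ)) _ measurableSet_Ioo]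
    · simp
    · intro y hy
      have : y ≠ 0 := hy.1.ne'
      simp [Complex.finrank_real_complex, this]
  refine Integrable.mono' h (by measurability) ?_
  filter_upwards with x
  simp

theorem aux_integrable (g : ℂ → ℂ) (hg : Continuous g) (c a : ℂ) (R : ℝ) :
    IntegrableOn (fun z => g z / (z - a)) (closedBall c R) := by
  have h1 : IntegrableOn (fun z : ℂ => (z - a)⁻¹) (closedBall c R) := by
    have h := aux_inv (R + dist c a + 1)
    rw [← integrable_indicator_iff measurableSet_ball] at h
    have h2 := h.comp_sub_right a
    refine (h2.integrableOn (s := closedBall c R)).congr_fun (fun z hz => ?_) measurableSet_closedBall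
    have : z - a ∈ ball (0:ℂ) (R + dist c a + 1) := by
      rw [mem_ball_zero_iff, ← dist_eq_norm]
      have := dist_triangle z c a
      rw [mem_closedBall] at hz
      linarith
    simp only [Set.indicator_of_mem this]
  simp only [div_eq_mul_inv]
  exact h1.continuousOn_mul hg.continuousOn (isCompact_closedBall c R)

theorem aux_cauchy0 (b : ℂ) (R : ℝ) (hb : ‖b‖ < R) (k : ℕ) :
    ∫ z in closedBall (0:ℂ) R, (starRingEnd ℂ) z ^ k / (z - b) =
      - Real.pi * (starRingEnd ℂ) b ^ (k+1) / (k+1) := by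
  have hi := aux_integrable (fun z => (starRingEnd ℂ) z ^ k) (Complex.continuous_conj.pow k) 0 b R
  have hmeas : Measurable (fun z => (starRingEnd ℂ) z ^ k / (z - b)) :=
    ((Complex.continuous_conj.pow k).measurable).div (by fun_prop)
  rw [← integral_indicator measurableSet_closedBall, aux_polar _ (hmeas.indicator measurableSet_closedBall)
    ((integrable_indicator_iff measurableSet_closedBall).2 hi)]
  have key : ∀ᵐ r ∂(volume.restrict (Set.Ioi (0:ℝ))), (2 * Real.pi * r) • Real.circleAverage 
      ((closedBall (0:ℂ) R).indicator fun z => (starRingEnd ℂ) z ^ k / (z - b)) 0 r =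
      (Set.Ioc 0 ‖b‖).indicator (fun r : ℝ => (-2 * Real.pi / b ^ (k+1)) * ((r ^ (2 * k + 1) : ℝ) : ℂ)) r := by
    have hne : ∀ᵐ r ∂(volume.restrict (Set.Ioi (0:ℝ))), r ≠ ‖b‖ :=
      ae_restrict_of_ae (Measure.ae_ne volume ‖b‖)
    filter_upwards [hne, ae_restrict_mem measurableSet_Ioi] with r hr hr0
    have hr0 : 0 < r := hr0
    by_cases hrR : r ≤ R
    · have : Real.circleAverage ((closedBall (0:ℂ) R).indicator fun z => (starRingEnd ℂ) z ^ k / (z - b)) 0 r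
        = Real.circleAverage (fun z => (starRingEnd ℂ) z ^ k / (z - b)) 0 r := by
        refine Real.circleAverage_congr_sphere (fun z hz => ?_)
        rw [abs_of_pos hr0, mem_sphere_zero_iff_norm] at hz
        rw [Set.indicator_of_mem]
        rw [mem_closedBall_zero_iff, hz]; exact hrR
      rw [this]
      rcases lt_or_gt_of_ne hr with h | h
      · rw [aux_avg_in b r hr0 h, Set.indicator_of_mem (Set.mem_Ioc.2 ⟨hr0, h.le⟩)]
        rw [Complex.real_smul]
        push_cast
        ring
      · rw [aux_avg_out b r hr0 h, Set.indicator_of_notMem (fun hh => by linarith [hh.2]), smul_zero]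
    · have : Real.circleAverage ((closedBall (0:ℂ) R).indicator fun z => (starRingEnd ℂ) z ^ k / (z - b)) 0 r
        = Real.circleAverage (fun z => 0) 0 r := by
        refine Real.circleAverage_congr_sphere (fun z hz => ?_)
        rw [abs_of_pos hr0, mem_sphere_zero_iff_norm] at hz
        rw [Set.indicator_of_notMem]
        rw [mem_closedBall_zero_iff, hz]; exact hrR
      rw [this, Real.circleAverage_const, smul_zero, Set.indicator_of_notMem (fun hh => by linarith [hh.2])]
  rw [integral_congr_ae key, integral_indicator measurableSet_Ioc, Measure.restrict_restrict measurableSet_Ioc,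
    Set.inter_eq_left.2 Set.Ioc_subset_Ioi_self, integral_const_mul, integral_complex_ofReal,
    ← intervalIntegral.integral_of_le (norm_nonneg b), integral_pow]
  by_cases hb0 : b = 0
  · simp [hb0]
  have hbb : (starRingEnd ℂ) b * b = (‖b‖:ℂ) ^ 2 := Complex.conj_mul' b
  have hk : (k:ℂ) + 1 ≠ 0 := by exact_mod_cast Nat.succ_ne_zero k
  have hk2 : (2 * (k:ℂ) + 1 + 1) ≠ 0 := by exact_mod_cast Nat.succ_ne_zero (2 * k + 1)
  have : (‖b‖:ℂ) ^ (2 * k + 1 + 1) = (starRingEnd ℂ) b ^ (k+1) * b ^ (k+1) := by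
    rw [← mul_pow, hbb, ← pow_mul]; ring_nf
  push_cast
  rw [this, zero_pow (by omega), sub_zero]
  field_simp
  ring

theorem aux_cauchy (c a s : ℂ) (R : ℝ) (ha : a ∈ ball c R) (n : ℕ) :
    ∫ z in closedBall c R, ((starRingEnd ℂ) z - (starRingEnd ℂ) s) ^ n / (z - a) =
      - Real.pi / (n+1) * (((starRingEnd ℂ) (a - s)) ^ (n+1) - ((starRingEnd ℂ) (c - s)) ^ (n+1)) := by
  have hb : ‖a - c‖ < R := by rwa [← dist_eq_norm]
  have h1 : ∫ z in closedBall c R, ((starRingEnd ℂ) z - (starRingEnd ℂ) s) ^ n / (z - a) =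
      ∫ z in closedBall (0:ℂ) R, ((starRingEnd ℂ) z + (starRingEnd ℂ) (c - s)) ^ n / (z - (a - c)) := by
    rw [← integral_indicator measurableSet_closedBall, ← integral_indicator measurableSet_closedBall,
      ← integral_add_right_eq_self _ c]
    congr 1
    ext z
    by_cases hz : z ∈ closedBall (0:ℂ) R
    · have hz' : z + c ∈ closedBall c R := by
        simpa [mem_closedBall, dist_eq_norm] using hz
      rw [Set.indicator_of_mem hz, Set.indicator_of_mem hz']
      simp only [map_add, map_sub]
      congr 1
      · ring
      · ring
    · have hz' : z + c ∉ closedBall c R := by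
        simpa [mem_closedBall, dist_eq_norm] using hz
      rw [Set.indicator_of_notMem hz, Set.indicator_of_notMem hz']
  have hk : (n:ℂ) + 1 ≠ 0 := by exact_mod_cast Nat.succ_ne_zero n
  rw [h1]
  set x := (starRingEnd ℂ) (c - s)
  have h2 : ∀ z : ℂ, ((starRingEnd ℂ) z + x) ^ n / (z - (a - c)) =
      ∑ k ∈ Finset.range (n+1), (x ^ (n-k) * (n.choose k)) * ((starRingEnd ℂ) z ^ k / (z - (a - c))) := by
    intro z
    rw [add_pow, Finset.sum_div]
    refine Finset.sum_congr rfl (fun k _ => by ring)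
  simp_rw [h2]
  rw [integral_finsetSum]
  · simp_rw [integral_const_mul, aux_cauchy0 (a - c) R hb]
    have h3 : (starRingEnd ℂ) (a - s) = (starRingEnd ℂ) (a - c) + x := by
      simp only [x, map_sub]; ring
    rw [h3, add_pow, Finset.sum_range_succ' _ (n+1)]
    simp only [pow_zero, one_mul, Nat.choose_zero_right, Nat.cast_one, mul_one, Nat.sub_zero, add_sub_cancel_right, Finset.mul_sum]
    refine Finset.sum_congr rfl (fun k _ => ?_)
    have hk' : (k:ℂ) + 1 ≠ 0 := by exact_mod_cast Nat.succ_ne_zero k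
    have hch : ((n:ℂ) + 1) * (n.choose k) = ((n+1).choose (k+1)) * (k + 1) := by
      exact_mod_cast Nat.add_one_mul_choose_eq n k
    have hch' : ((n+1).choose (k+1) : ℂ) = ((n:ℂ) + 1) * (n.choose k) / (k+1) := by
      rw [hch]; field_simp
    rw [hch', show n + 1 - (k+1) = n - k by omega]
    field_simp
  · intro k _
    exact (aux_integrable (fun z => (starRingEnd ℂ) z ^ k) (Complex.continuous_conj.pow k) 0 (a - c) R).const_mul _

theorem aux_deriv (S : Set ℂ) (hS : MeasurableSet S) (c₁ c₂ : ℂ) (R₁ r₂ : ℝ)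
    (h1 : S ⊆ closedBall c₁ R₁) (h2 : ∀ z ∈ S, z ∉ closedBall c₂ r₂)
    (g : ℂ → ℂ) (hg : Continuous g) (m : ℕ) (a : ℂ) (ha : a ∈ ball c₂ r₂) :
    HasDerivAt (fun x => ∫ z in S, g z / (z - x) ^ m) (m * ∫ z in S, g z / (z - a) ^ (m+1)) a := by
  obtain ⟨C, hC⟩ := (isCompact_closedBall c₁ R₁).exists_bound_of_continuousOn hg.continuousOn
  rw [mem_ball] at ha
  set ε := r₂ - dist a c₂ with hε
  have hε0 : 0 < ε := by rw [hε]; linarith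
  have hfin : volume S < ⊤ := lt_of_le_of_lt (measure_mono h1) (isCompact_closedBall c₁ R₁).measure_lt_top
  have : IsFiniteMeasure (volume.restrict S) := ⟨by simpa using hfin⟩
  have hlow : ∀ x ∈ ball a (ε/2), ∀ z ∈ S, ε/2 ≤ ‖z - x‖ := by
    intro x hx z hz
    have h3 := h2 z hz
    rw [mem_closedBall, not_le] at h3
    rw [mem_ball] at hx
    rw [← dist_eq_norm]
    have := dist_triangle z x c₂
    have := dist_triangle x a c₂
    linarith
  have hb : ∀ m : ℕ, ∀ x ∈ ball a (ε/2), ∀ z ∈ S, ‖g z / (z - x) ^ m‖ ≤ C / (ε/2) ^ m := by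
    intro m x hx z hz
    rw [norm_div, norm_pow]
    have := hC z (h1 hz)
    have := hlow x hx z hz
    have : 0 ≤ C := (norm_nonneg _).trans (hC z (h1 hz))
    gcongr
  have hms : ∀ m : ℕ, ∀ x, AEStronglyMeasurable (fun z => g z / (z - x) ^ m) (volume.restrict S) := by
    intro m x
    have := hg.measurable
    exact Measurable.aestronglyMeasurable (by fun_prop)
  rw [← integral_const_mul]
  refine (hasDerivAt_integral_of_dominated_loc_of_deriv_le (μ := volume.restrict S) (s := ball a (ε/2))
    (bound := fun _ => m * (C / (ε/2) ^ (m+1))) (F := fun x z => g z / (z - x) ^ m)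
    (F' := fun x z => m * (g z / (z - x) ^ (m+1))) (ball_mem_nhds _ (by linarith)) ?_ ?_ ?_ ?_ ?_ ?_).2
  · exact Filter.Eventually.of_forall (hms m)
  · refine Integrable.mono' (integrable_const (C / (ε/2) ^ m)) (hms m a) ?_
    filter_upwards [ae_restrict_mem hS] with z hz
    exact hb m a (mem_ball_self (by linarith)) z hz
  · exact (hms (m+1) a).const_mul _
  · filter_upwards [ae_restrict_mem hS] with z hz x hx
    rw [norm_mul, Complex.norm_natCast]
    exact mul_le_mul_of_nonneg_left (hb (m+1) x hx z hz) (Nat.cast_nonneg _)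
  · exact integrable_const _
  · filter_upwards [ae_restrict_mem hS] with z hz x hx
    have hne : z - x ≠ 0 := by
      have := hlow x hx z hz
      exact norm_pos_iff.1 (by linarith)
    have h := (((hasDerivAt_id x).const_sub z).pow m).inv (pow_ne_zero m hne)
    have h' := h.const_mul (g z)
    convert! h' using 1
    simp only [id, Pi.pow_apply]
    rcases m with _ | m
    · simp
    · simp only [Nat.add_sub_cancel]
      field_simp
      ring

/-- `∫_{D' \ δ} (conj ζ − conj s)^n/(ζ − s)^m dA(ζ) = 0` for closed
disks `δ ⊆ D'`, `m ≥ 2`, `n ≥ 0`, and `s` an interior point of `δ`. -/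
theorem integral_annulus_zero (c₁ c₂ : ℂ) (R₁ r₂ : ℝ) (hr₂ : 0 < r₂)
    (hsub : closedBall c₂ r₂ ⊆ closedBall c₁ R₁) (m n : ℕ) (hm : 2 ≤ m)
    (s : ℂ) (hs : s ∈ ball c₂ r₂) :
    ∫ ζ in closedBall c₁ R₁ \ closedBall c₂ r₂,
      ((starRingEnd ℂ) ζ - (starRingEnd ℂ) s) ^ n / (ζ - s) ^ m = 0 := by
  have hg : Continuous (fun z : ℂ => ((starRingEnd ℂ) z - (starRingEnd ℂ) s) ^ n) :=
    (Complex.continuous_conj.sub continuous_const).pow n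
  have hbb : ball c₂ r₂ ⊆ ball c₁ R₁ := by
    have hR : R₁ ≠ 0 := by
      rintro rfl
      rw [closedBall_zero] at hsub
      have e1 : c₂ = c₁ := hsub (mem_closedBall_self hr₂.le)
      have e2 : c₂ + r₂ = c₁ := hsub (by simp [mem_closedBall, abs_of_pos hr₂])
      rw [e1] at e2
      have : (r₂ : ℂ) = 0 := by simpa using e2
      exact hr₂.ne' (by exact_mod_cast this)
    rw [← interior_closedBall c₂ hr₂.ne', ← interior_closedBall c₁ hR]
    exact interior_mono hsub
  have hd := aux_deriv (closedBall c₁ R₁ \ closedBall c₂ r₂)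
    (measurableSet_closedBall.diff measurableSet_closedBall) c₁ c₂ R₁ r₂ Set.sdiff_subset
    (fun z hz => hz.2) _ hg
  have hconst : ∃ K : ℂ, ∀ a ∈ ball c₂ r₂, ∫ z in closedBall c₁ R₁ \ closedBall c₂ r₂,
      ((starRingEnd ℂ) z - (starRingEnd ℂ) s) ^ n / (z - a) ^ 1 = K := by
    refine ⟨- Real.pi / (n+1) * (((starRingEnd ℂ) (c₂ - s)) ^ (n+1) - ((starRingEnd ℂ) (c₁ - s)) ^ (n+1)), fun a ha => ?_⟩
    simp only [pow_one]
    rw [setIntegral_sdiff measurableSet_closedBall (aux_integrable _ hg c₁ a R₁) hsub,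
      aux_cauchy c₁ a s R₁ (hbb ha), aux_cauchy c₂ a s r₂ ha]
    ring
  have step : ∀ m : ℕ, 1 ≤ m → (∃ K : ℂ, ∀ a ∈ ball c₂ r₂, ∫ z in closedBall c₁ R₁ \ closedBall c₂ r₂,
      ((starRingEnd ℂ) z - (starRingEnd ℂ) s) ^ n / (z - a) ^ m = K) → 
      ∀ a ∈ ball c₂ r₂, ∫ z in closedBall c₁ R₁ \ closedBall c₂ r₂,
      ((starRingEnd ℂ) z - (starRingEnd ℂ) s) ^ n / (z - a) ^ (m+1) = 0 := by
    rintro m hm1 ⟨K, hK⟩ a ha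
    have e1 := hd m a ha
    have e2 : HasDerivAt (fun x => ∫ z in closedBall c₁ R₁ \ closedBall c₂ r₂,
      ((starRingEnd ℂ) z - (starRingEnd ℂ) s) ^ n / (z - x) ^ m) 0 a := by
      refine (hasDerivAt_const a K).congr_of_eventuallyEq ?_
      filter_upwards [isOpen_ball.mem_nhds ha] with x hx using hK x hx
    have e3 := e1.unique e2
    have hm0 : (m:ℂ) ≠ 0 := by exact_mod_cast (by omega : m ≠ 0)
    exact (mul_eq_zero.1 e3).resolve_left hm0
  have all : ∀ j : ℕ, ∀ a ∈ ball c₂ r₂, ∫ z in closedBall c₁ R₁ \ closedBall c₂ r₂,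
      ((starRingEnd ℂ) z - (starRingEnd ℂ) s) ^ n / (z - a) ^ (j+2) = 0 := by
    intro j
    induction j with
    | zero => exact step 1 le_rfl hconst
    | succ j ih => exact step (j+2) (by omega) ⟨0, ih⟩
  obtain ⟨j, rfl⟩ := Nat.exists_eq_add_of_le' hm
  exact all j s hs
end
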